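/- Let (ξ_i)_{i∈ℕ} be a sequence of identically distributed real random variables on (Ω, 𝓕, ℙ) with 𝔼[|ξ_1|] < ∞. Suppose (ξ_i) is α-mixing with mixing coefficients (α(n))_{n≥1}, extended by α(t) := α(⌊t⌋) for t ≥ 1 and α(t) := 1/4 for t ∈ [0,1). Let G be the distribution function of |ξ_1| and Ḡ := 1 − G. If ∫_0^1 log(1 + α^→(y/2)) · Ḡ^→(y) dy < ∞, then (1/n)·Σ_{i=1}^n (ξ_i − 𝔼[ξ_i]) → 0 ℙ-almost surely as n → ∞. -/

import Mathlib

open MeasureTheory Filter Set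

/-- Distribution function of a random variable. -/
noncomputable def distFun {Ω : Type*} [MeasurableSpace Ω] (P : Measure Ω) (Y : Ω → ℝ) (x : ℝ) : ℝ :=
  (P {ω | Y ω ≤ x}).toReal

/-- α-mixing coefficients of a sequence of real random variables. -/
noncomputable def alphaCoef {Ω : Type*} [MeasurableSpace Ω] (P : Measure Ω)
    (X : ℕ → Ω → ℝ) (n : ℕ) : ℝ :=
  sSup { c : ℝ | ∃ (k : ℕ) (A B : Set Ω),
    MeasurableSet[⨆ i ∈ {i : ℕ | i ≤ k}, MeasurableSpace.comap (X i) Real.measurableSpace] A ∧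
    MeasurableSet[⨆ i ∈ {i : ℕ | k + n ≤ i}, MeasurableSpace.comap (X i) Real.measurableSpace] B ∧
    c = |(P (A ∩ B)).toReal - (P A).toReal * (P B).toReal| }

/-- Càdlàg extension of mixing coefficients, equal to `1/4` on `[0,1)`
and to `α ⌊t⌋` for `t ≥ 1`. -/
noncomputable def alphaExt (α : ℕ → ℝ) (t : ℝ) : ℝ :=
  if t < 1 then 1 / 4 else α ⌊t⌋₊

/-- Right-continuous inverse of a nonincreasing function on `[0,∞)`, with `sup ∅ = 0`. -/
noncomputable def rcInv (h : ℝ → ℝ) (y : ℝ) : ℝ :=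
  sSup { x : ℝ | 0 ≤ x ∧ y < h x }

/-!
Splitting `ξ` into its positive and negative parts, one may assume that the process `X` is
nonnegative; its partial sums are then monotone and it suffices to treat them along `n = ⌊ρ ^ j⌋`.
At the scale `M = ρ ^ j` Borel–Cantelli allows truncating `X` at height `M`, and `min X M` is cut
into layers, the `k`-th one lying between the heights `q = M / 4 ^ (k + 1)` and `4 * q`. The `k`-th
layer is compared with its conditional expectation given the past with gap `2 ^ k`. The differences
are orthogonal at distances at least `2 ^ k`, so their sum divided by `M` has a second moment of
order `2 ^ (-k) * q * P (q < X)`. What remains is a predicted part, whose `L¹` norm after division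
by `M` is at most `8 * q * min (α (2 ^ k)) (P (q < X))` by the mixing condition. Summed over the
scales `ρ ^ j` these bounds become integrals over `q`: the first one is
`2 ^ (-k) * ∫ P (s < X) ds = 2 ^ (-k) * E X` up to a constant, and the second one is summable in
`k` if `∑ k, ∫ min (α (2 ^ k)) (P (s < X)) ds < ∞`. By the layer cake formula the latter follows
from the logarithmic condition, because the number of `k` with `y < α (2 ^ k)` is at most a
constant times `log (1 + α^→ (y / 2))`.
-/

section PastSigma

variable {Ω E : Type*} [mE : MeasurableSpace E]

/-- The σ-algebra of the past of `i` with gap `p`: the one generated by the `X j`, `j ≤ i - p`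
(trivial when `i < p`). -/
abbrev pastSigma (X : ℕ → Ω → E) (i p : ℕ) : MeasurableSpace Ω :=
  ⨆ j ∈ {j : ℕ | j + p ≤ i}, mE.comap (X j)

lemma measurable_pastSigma (X : ℕ → Ω → E) {i j p : ℕ} (h : j + p ≤ i) :
    Measurable[pastSigma X i p] (X j) :=
  Measurable.of_comap_le (le_iSup₂_of_le j h le_rfl)

lemma pastSigma_le {m : MeasurableSpace Ω} {X : ℕ → Ω → E} {i p : ℕ}
    (h : ∀ j, j + p ≤ i → Measurable[m] (X j)) : pastSigma X i p ≤ m :=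
  iSup₂_le fun j hj => (h j hj).comap_le

lemma pastSigma_le_of_measurable {m : MeasurableSpace Ω} {X : ℕ → Ω → E}
    (h : ∀ j, Measurable (X j)) (i p : ℕ) : pastSigma X i p ≤ m :=
  pastSigma_le fun j _ => h j

lemma pastSigma_mono (X : ℕ → Ω → E) {i l : ℕ} (p : ℕ) (h : i ≤ l) :
    pastSigma X i p ≤ pastSigma X l p :=
  pastSigma_le fun _ hj => measurable_pastSigma X (hj.trans h)

end PastSigma

section AlphaMixingBound

variable {Ω E F : Type*} [MeasurableSpace Ω] [mE : MeasurableSpace E] [mF : MeasurableSpace F]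
  {P : Measure Ω}

/-- `α p` bounds the strong mixing coefficient between the past of any time `i` with gap `p` and
the *single* variable `X i`. This is weaker than α-mixing with coefficients `α`, where the whole
future of `i` takes the place of `X i`. -/
def AlphaMixingBound (P : Measure Ω) (X : ℕ → Ω → E) (α : ℕ → ℝ) : Prop :=
  ∀ ⦃i p : ℕ⦄ ⦃A B : Set Ω⦄, MeasurableSet[pastSigma X i p] A →
    MeasurableSet[MeasurableSpace.comap (X i) mE] B →
      |P.real (A ∩ B) - P.real A * P.real B| ≤ α p

lemma AlphaMixingBound.nonneg {X : ℕ → Ω → E} {α : ℕ → ℝ} (h : AlphaMixingBound P X α) (p : ℕ) :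
    0 ≤ α p :=
  (abs_nonneg _).trans <|
    h (i := 0) (MeasurableSpace.measurableSet_empty _) (MeasurableSpace.measurableSet_empty _)

lemma AlphaMixingBound.comp {X : ℕ → Ω → E} {α : ℕ → ℝ} (h : AlphaMixingBound P X α)
    {g : E → F} (hg : Measurable g) : AlphaMixingBound P (fun i ω => g (X i ω)) α := by
  intro i p A B hA hB
  refine h (pastSigma_le (fun j hj => hg.comp (measurable_pastSigma X hj)) _ hA) ?_
  exact (hg.comp (comap_measurable (X i))).comap_le _ hB

lemma abs_measureReal_inter_sub_mul_le_one [IsProbabilityMeasure P] (A B : Set Ω) :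
    |P.real (A ∩ B) - P.real A * P.real B| ≤ 1 := by
  rw [abs_sub_le_iff]
  have hAB : 0 ≤ P.real A * P.real B := mul_nonneg measureReal_nonneg measureReal_nonneg
  have hAB' : P.real A * P.real B ≤ 1 :=
    mul_le_one₀ measureReal_le_one measureReal_nonneg measureReal_le_one
  have h0 : 0 ≤ P.real (A ∩ B) := measureReal_nonneg
  have h1 : P.real (A ∩ B) ≤ 1 := measureReal_le_one
  constructor <;> linarith

lemma alphaMixingBound_alphaCoef [IsProbabilityMeasure P] (X : ℕ → Ω → ℝ) :
    AlphaMixingBound P X (alphaCoef P X) := by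
  intro i p A B hA hB
  refine le_csSup ⟨1, ?_⟩ ?_
  · rintro _ ⟨_, A, B, _, _, rfl⟩
    exact abs_measureReal_inter_sub_mul_le_one A B
  rcases le_or_gt p i with hpi | hpi
  · refine ⟨i - p, A, B, ?_, ?_, rfl⟩
    · have hpast : {j : ℕ | j ≤ i - p} = {j | j + p ≤ i} := ext fun j => Nat.le_sub_iff_add_le hpi
      rwa [hpast]
    · exact le_iSup₂_of_le (f := fun j (_ : j ∈ {j : ℕ | i - p + p ≤ j}) =>
        MeasurableSpace.comap (X j) Real.measurableSpace) i (Nat.sub_add_cancel hpi).le le_rfl B hB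
  · have hbot : pastSigma X i p = ⊥ := le_bot_iff.1 (pastSigma_le fun j hj => by omega)
    rw [hbot, MeasurableSpace.measurableSet_bot_iff] at hA
    refine ⟨0, ∅, ∅, MeasurableSpace.measurableSet_empty _,
      MeasurableSpace.measurableSet_empty _, ?_⟩
    rcases hA with rfl | rfl <;> simp

end AlphaMixingBound

section Covariance

variable {Ω : Type*} {m m0 : MeasurableSpace Ω} {P : Measure Ω} {Z W : Ω → ℝ} {a b c : ℝ}

lemma abs_setIntegral_sub_measureReal_mul_integral_le [IsFiniteMeasure P] {A : Set Ω}
    (hZ : Measurable Z) (hb : 0 ≤ b) (hZb : ∀ ω, Z ω ∈ Icc 0 b)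
    (ha : ∀ t, |P.real (A ∩ {ω | t ≤ Z ω}) - P.real A * P.real {ω | t ≤ Z ω}| ≤ a) :
    |∫ ω in A, Z ω ∂P - P.real A * ∫ ω, Z ω ∂P| ≤ b * a := by
  have hZint : Integrable Z P := .of_mem_Icc 0 b hZ.aemeasurable (ae_of_all _ hZb)
  have tail_integrable (μ : Measure Ω) [IsFiniteMeasure μ] :
      IntegrableOn (fun t => μ.real {ω | t ≤ Z ω}) (Ioc 0 b) := by
    have hanti : Antitone fun t => μ.real {ω | t ≤ Z ω} := fun s t hst =>
      measureReal_mono fun ω (h : t ≤ Z ω) => hst.trans h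
    exact ((hanti.antitoneOn _).integrableOn_isCompact isCompact_Icc).mono_set Ioc_subset_Icc_self
  have layercake (μ : Measure Ω) (hμ : Integrable Z μ) :
      ∫ ω, Z ω ∂μ = ∫ t in Ioc 0 b, μ.real {ω | t ≤ Z ω} :=
    hμ.integral_eq_integral_Ioc_meas_le (ae_of_all _ fun ω => (hZb ω).1)
      (ae_of_all _ fun ω => (hZb ω).2)
  rw [layercake P hZint, layercake _ hZint.restrict, ← integral_const_mul,
    ← integral_sub (tail_integrable _) ((tail_integrable _).const_mul _), ← Real.norm_eq_abs]
  refine (norm_setIntegral_le_of_norm_le_const (C := a) (by simp) fun t _ => ?_).trans_eq ?_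
  · rw [Real.norm_eq_abs, measureReal_restrict_apply (measurableSet_le measurable_const hZ),
      inter_comm]
    exact ha t
  · simp [hb, mul_comm]

lemma integral_abs_le_two_mul_of_forall_abs_setIntegral_le
    (hW : StronglyMeasurable[m] W) (hWint : Integrable W P)
    (hc : ∀ S, MeasurableSet[m] S → |∫ ω in S, W ω ∂P| ≤ c) : ∫ ω, |W ω| ∂P ≤ 2 * c := by
  have hpos : |∫ ω in {ω | 0 ≤ W ω}, W ω ∂P| ≤ c :=
    hc _ (measurableSet_le measurable_const hW.measurable)
  have hneg : |∫ ω in {ω | W ω ≤ 0}, W ω ∂P| ≤ c :=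
    hc _ (measurableSet_le hW.measurable measurable_const)
  calc ∫ ω, |W ω| ∂P = ∫ ω in {ω | 0 ≤ W ω}, W ω ∂P - ∫ ω in {ω | W ω ≤ 0}, W ω ∂P :=
        integral_norm_eq_pos_sub_neg hWint
    _ ≤ 2 * c := by linarith [(abs_le.1 hpos).2, (abs_le.1 hneg).1]

lemma integral_abs_condExp_sub_integral_le [IsProbabilityMeasure P] (hm : m ≤ m0)
    (hZ : Measurable Z) (hb : 0 ≤ b) (hZb : ∀ ω, Z ω ∈ Icc 0 b)
    (ha : ∀ A, MeasurableSet[m] A →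
      ∀ t, |P.real (A ∩ {ω | t ≤ Z ω}) - P.real A * P.real {ω | t ≤ Z ω}| ≤ a) :
    ∫ ω, |P[Z | m] ω - ∫ ω', Z ω' ∂P| ∂P ≤ 2 * min (b * a) (∫ ω, Z ω ∂P) := by
  have hZint : Integrable Z P := .of_mem_Icc 0 b hZ.aemeasurable (ae_of_all _ hZb)
  have hZ0 : 0 ≤ᵐ[P] Z := ae_of_all _ fun ω => (hZb ω).1
  refine integral_abs_le_two_mul_of_forall_abs_setIntegral_le
    (stronglyMeasurable_condExp.sub stronglyMeasurable_const)
    (integrable_condExp.sub (integrable_const _)) fun S hS => ?_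
  have hcov : ∫ ω in S, (P[Z | m] ω - ∫ ω', Z ω' ∂P) ∂P
      = ∫ ω in S, Z ω ∂P - P.real S * ∫ ω, Z ω ∂P := by
    rw [integral_sub integrable_condExp.integrableOn (integrable_const _),
      setIntegral_condExp hm hZint hS]
    simp
  rw [hcov]
  refine le_min (abs_setIntegral_sub_measureReal_mul_integral_le hZ hb hZb (ha S hS)) ?_
  exact abs_sub_le_of_nonneg_of_le (setIntegral_nonneg_of_ae hZ0)
    (setIntegral_le_integral hZint hZ0)
    (mul_nonneg measureReal_nonneg (integral_nonneg_of_ae hZ0))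
    (mul_le_of_le_one_left (integral_nonneg_of_ae hZ0) measureReal_le_one)

end Covariance

section Orthogonality

variable {Ω : Type*} {m m0 : MeasurableSpace Ω} {P : Measure Ω} {Y Z : Ω → ℝ}

lemma integral_mul_sub_condExp_eq_zero [IsFiniteMeasure P] (hm : m ≤ m0)
    (hY : StronglyMeasurable[m] Y) (hY2 : MemLp Y 2 P) (hZ2 : MemLp Z 2 P) :
    ∫ ω, Y ω * (Z ω - P[Z | m] ω) ∂P = 0 := by
  have hZ : Integrable Z P := hZ2.integrable one_le_two
  have hYZ : Integrable (Y * Z) P := hY2.integrable_mul hZ2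
  have hYc : Integrable (Y * P[Z | m]) P := hY2.integrable_mul (hZ2.condExp one_le_two)
  have hpull : ∫ ω, (Y * P[Z | m]) ω ∂P = ∫ ω, (Y * Z) ω ∂P := by
    rw [← integral_condExp hm (f := Y * Z)]
    exact integral_congr_ae (condExp_mul_of_stronglyMeasurable_left hY hYZ hZ).symm
  calc ∫ ω, Y ω * (Z ω - P[Z | m] ω) ∂P = ∫ ω, ((Y * Z) ω - (Y * P[Z | m]) ω) ∂P := by
        simp only [Pi.mul_apply, mul_sub]
    _ = 0 := by rw [integral_sub hYZ hYc, hpull, sub_self]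

lemma integral_sq_sub_condExp_le [IsFiniteMeasure P] (hm : m ≤ m0) (hZ2 : MemLp Z 2 P) :
    ∫ ω, (Z ω - P[Z | m] ω) ^ 2 ∂P ≤ ∫ ω, Z ω ^ 2 ∂P := by
  calc ∫ ω, (Z ω - P[Z | m] ω) ^ 2 ∂P = ∫ ω, ProbabilityTheory.condVar m Z P ω ∂P :=
        (integral_condExp hm (f := (Z - P[Z | m]) ^ 2)).symm
    _ ≤ ∫ ω, P[Z ^ 2 | m] ω ∂P :=
        integral_mono_ae ProbabilityTheory.integrable_condVar integrable_condExp
          (ProbabilityTheory.condVar_ae_le_condExp_sq hm hZ2)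
    _ = ∫ ω, Z ω ^ 2 ∂P := integral_condExp hm

lemma integral_mul_le_of_integral_sq_le {v : ℝ} (hY : MemLp Y 2 P) (hZ : MemLp Z 2 P)
    (hYv : ∫ ω, Y ω ^ 2 ∂P ≤ v) (hZv : ∫ ω, Z ω ^ 2 ∂P ≤ v) : ∫ ω, Y ω * Z ω ∂P ≤ v := by
  calc ∫ ω, Y ω * Z ω ∂P ≤ ∫ ω, (Y ω ^ 2 + Z ω ^ 2) / 2 ∂P := by
        refine integral_mono (hY.integrable_mul hZ)
          ((hY.integrable_sq.add hZ.integrable_sq).div_const 2) fun ω => ?_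
        simp only
        linarith [two_mul_le_add_sq (Y ω) (Z ω)]
    _ ≤ v := by
        rw [integral_div, integral_add hY.integrable_sq hZ.integrable_sq]
        linarith

lemma card_filter_range_near_le (n i p : ℕ) :
    ({l ∈ Finset.range n | l < i + p ∧ i < l + p} : Finset ℕ).card ≤ 2 * p := by
  have hsub : ({l ∈ Finset.range n | l < i + p ∧ i < l + p} : Finset ℕ)
      ⊆ Finset.Ico (i + 1 - p) (i + p) := by
    intro l
    simp only [Finset.mem_filter, Finset.mem_range, Finset.mem_Ico]
    omega
  have hle := Finset.card_le_card hsub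
  rw [Nat.card_Ico] at hle
  omega

lemma integral_sq_sum_le_of_integral_mul_eq_zero {D : ℕ → Ω → ℝ} {p : ℕ} {v : ℝ}
    (hD : ∀ i, MemLp (D i) 2 P) (hv : ∀ i, ∫ ω, D i ω ^ 2 ∂P ≤ v)
    (horth : ∀ i l, i + p ≤ l → ∫ ω, D i ω * D l ω ∂P = 0) (n : ℕ) :
    ∫ ω, (∑ i ∈ Finset.range n, D i ω) ^ 2 ∂P ≤ n * (2 * p * v) := by
  have hint (i l : ℕ) : Integrable (fun ω => D i ω * D l ω) P := (hD i).integrable_mul (hD l)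
  have hv0 : 0 ≤ v := (integral_nonneg fun ω => sq_nonneg (D 0 ω)).trans (hv 0)
  have row_le (i : ℕ) : ∑ l ∈ Finset.range n, ∫ ω, D i ω * D l ω ∂P ≤ 2 * p * v := by
    have hzero (l : ℕ) (hl : ¬(l < i + p ∧ i < l + p)) : ∫ ω, D i ω * D l ω ∂P = 0 := by
      rcases le_or_gt (i + p) l with hil | hil
      · exact horth i l hil
      · simpa only [mul_comm] using horth l i (by omega)
    calc ∑ l ∈ Finset.range n, ∫ ω, D i ω * D l ω ∂P
        = ∑ l ∈ Finset.range n with l < i + p ∧ i < l + p, ∫ ω, D i ω * D l ω ∂P :=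
          (Finset.sum_filter_of_ne fun l _ hl => not_not.1 (mt (hzero l) hl)).symm
      _ ≤ ({l ∈ Finset.range n | l < i + p ∧ i < l + p} : Finset ℕ).card • v :=
          Finset.sum_le_card_nsmul _ _ _ fun l _ =>
            integral_mul_le_of_integral_sq_le (hD i) (hD l) (hv i) (hv l)
      _ ≤ 2 * p * v := by
          rw [nsmul_eq_mul]
          exact mul_le_mul_of_nonneg_right (mod_cast card_filter_range_near_le n i p) hv0
  calc ∫ ω, (∑ i ∈ Finset.range n, D i ω) ^ 2 ∂P
      = ∑ i ∈ Finset.range n, ∑ l ∈ Finset.range n, ∫ ω, D i ω * D l ω ∂P := by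
        simp_rw [sq, Finset.sum_mul_sum]
        rw [integral_finsetSum _ fun i _ => integrable_finsetSum _ fun l _ => hint i l]
        exact Finset.sum_congr rfl fun i _ => integral_finsetSum _ fun l _ => hint i l
    _ ≤ ∑ i ∈ Finset.range n, 2 * p * v := Finset.sum_le_sum fun i _ => row_le i
    _ = n * (2 * p * v) := by simp

end Orthogonality

section Innovation

variable {Ω : Type*} [MeasurableSpace Ω] {P : Measure Ω} {Z : ℕ → Ω → ℝ} {b : ℝ}

/-- The part of `Z i` that is new with respect to the past with gap `p`. -/
noncomputable def innovation (P : Measure Ω) (Z : ℕ → Ω → ℝ) (p i : ℕ) (ω : Ω) : ℝ :=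
  Z i ω - P[Z i | pastSigma Z i p] ω

/-- The centred part of `Z i` predicted by the past with gap `p`;
`Z i - E[Z i]` is the sum of the innovation and the drift. -/
noncomputable def drift (P : Measure Ω) (Z : ℕ → Ω → ℝ) (p i : ℕ) (ω : Ω) : ℝ :=
  P[Z i | pastSigma Z i p] ω - ∫ ω', Z i ω' ∂P

lemma memLp_innovation (hZ : ∀ i, MemLp (Z i) 2 P) (p i : ℕ) :
    MemLp (innovation P Z p i) 2 P :=
  (hZ i).sub ((hZ i).condExp one_le_two)

lemma integral_innovation_mul_innovation [IsFiniteMeasure P] (hmeas : ∀ i, Measurable (Z i))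
    (hZ : ∀ i, MemLp (Z i) 2 P) {p i l : ℕ} (hil : i + p ≤ l) :
    ∫ ω, innovation P Z p i ω * innovation P Z p l ω ∂P = 0 := by
  refine integral_mul_sub_condExp_eq_zero (pastSigma_le_of_measurable hmeas l p) ?_
    (memLp_innovation hZ p i) (hZ l)
  exact (measurable_pastSigma Z hil).stronglyMeasurable.sub
    (stronglyMeasurable_condExp.mono (pastSigma_mono Z p (by omega)))

lemma integral_sq_sum_innovation_le [IsFiniteMeasure P] (hmeas : ∀ i, Measurable (Z i))
    (hZb : ∀ i ω, Z i ω ∈ Icc 0 b) {e : ℝ} (he : ∀ i, b * ∫ ω, Z i ω ∂P ≤ e) (p n : ℕ) :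
    ∫ ω, (∑ i ∈ Finset.range n, innovation P Z p i ω) ^ 2 ∂P ≤ n * (2 * p * e) := by
  have hZ (i : ℕ) : MemLp (Z i) 2 P :=
    memLp_of_bounded (ae_of_all _ (hZb i)) (hmeas i).aestronglyMeasurable 2
  refine integral_sq_sum_le_of_integral_mul_eq_zero (memLp_innovation hZ p) (fun i => ?_)
    (fun i l => integral_innovation_mul_innovation hmeas hZ) n
  calc ∫ ω, innovation P Z p i ω ^ 2 ∂P ≤ ∫ ω, Z i ω ^ 2 ∂P :=
        integral_sq_sub_condExp_le (pastSigma_le_of_measurable hmeas i p) (hZ i)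
    _ ≤ ∫ ω, b * Z i ω ∂P := by
        refine integral_mono (hZ i).integrable_sq (((hZ i).integrable one_le_two).const_mul b)
          fun ω => ?_
        simp only [sq]
        exact mul_le_mul_of_nonneg_right (hZb i ω).2 (hZb i ω).1
    _ ≤ e := by
        rw [integral_const_mul]
        exact he i

lemma integrable_drift [IsFiniteMeasure P] (p i : ℕ) : Integrable (drift P Z p i) P :=
  integrable_condExp.sub (integrable_const _)

lemma integral_abs_sum_drift_le [IsProbabilityMeasure P] (hmeas : ∀ i, Measurable (Z i))
    (hZb : ∀ i ω, Z i ω ∈ Icc 0 b) (hb : 0 ≤ b) {α : ℕ → ℝ} (hα : AlphaMixingBound P Z α) {e : ℝ}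
    (he : ∀ i, ∫ ω, Z i ω ∂P ≤ e) (p n : ℕ) :
    ∫ ω, |∑ i ∈ Finset.range n, drift P Z p i ω| ∂P ≤ n * (2 * min (b * α p) e) := by
  have drift_le (i : ℕ) : ∫ ω, |drift P Z p i ω| ∂P ≤ 2 * min (b * α p) e := by
    refine (integral_abs_condExp_sub_integral_le (pastSigma_le_of_measurable hmeas i p) (hmeas i)
      hb (hZb i) fun A hA t => hα hA ⟨{x | t ≤ x}, measurableSet_Ici, rfl⟩).trans ?_
    gcongr
    exact he i
  calc ∫ ω, |∑ i ∈ Finset.range n, drift P Z p i ω| ∂P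
      ≤ ∫ ω, ∑ i ∈ Finset.range n, |drift P Z p i ω| ∂P :=
        integral_mono (integrable_finsetSum _ fun i _ => integrable_drift p i).abs
          (integrable_finsetSum _ fun i _ => (integrable_drift p i).abs)
          fun ω => Finset.abs_sum_le_sum_abs _ _
    _ = ∑ i ∈ Finset.range n, ∫ ω, |drift P Z p i ω| ∂P :=
        integral_finsetSum _ fun i _ => (integrable_drift p i).abs
    _ ≤ ∑ i ∈ Finset.range n, 2 * min (b * α p) e := Finset.sum_le_sum fun i _ => drift_le i
    _ = n * (2 * min (b * α p) e) := by simp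

end Innovation

section LogCondition

variable {K S : Type*} [MeasurableSpace K] [MeasurableSpace S] {μ : Measure K} {ν : Measure S}
  {h : ℝ → ℝ} {α : ℕ → ℝ} {y : ℝ}

lemma rcInv_nonneg (h : ℝ → ℝ) (y : ℝ) : 0 ≤ rcInv h y :=
  Real.sSup_nonneg fun _ hx => hx.1

lemma le_rcInv (hh : Tendsto h atTop (nhds 0)) (hy : 0 < y) {x : ℝ} (hx : 0 ≤ x) (hyx : y < h x) :
    x ≤ rcInv h y := by
  obtain ⟨N, hN⟩ := eventually_atTop.1 (hh.eventually (gt_mem_nhds hy))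
  refine le_csSup ⟨N, fun z hz => ?_⟩ ⟨hx, hyx⟩
  exact le_of_not_gt fun hNz => (hN z hNz.le).not_gt hz.2

lemma volume_restrict_setOf_lt_le_rcInv (hh : Tendsto h atTop (nhds 0)) (hy : 0 < y) :
    volume.restrict (Ioi 0) {s | y < h s} ≤ ENNReal.ofReal (rcInv h y) := by
  rw [Measure.restrict_apply' measurableSet_Ioi]
  calc volume ({s | y < h s} ∩ Ioi 0) ≤ volume (Icc 0 (rcInv h y)) :=
        measure_mono fun s hs => ⟨hs.2.le, le_rcInv hh hy hs.2.le hs.1⟩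
    _ = ENNReal.ofReal (rcInv h y) := by simp

lemma tendsto_alphaExt (hα : Tendsto α atTop (nhds 0)) :
    Tendsto (alphaExt α) atTop (nhds 0) := by
  refine (hα.comp tendsto_nat_floor_atTop).congr' ?_
  filter_upwards [eventually_ge_atTop (1 : ℝ)] with t ht
  exact (if_neg ht.not_gt).symm

lemma alphaExt_natCast {n : ℕ} (hn : 1 ≤ n) : alphaExt α n = α n := by
  rw [alphaExt, if_neg (by exact_mod_cast hn.not_gt), Nat.floor_natCast]

lemma count_two_pow_le_le (r : ℝ) :
    Measure.count {k : ℕ | (2 : ℝ) ^ k ≤ r} ≤ ENNReal.ofReal (2 * Real.logb 2 (1 + r)) := by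
  rcases lt_or_ge r 1 with hr | hr
  · have hempty : {k : ℕ | (2 : ℝ) ^ k ≤ r} = ∅ :=
      eq_empty_of_forall_notMem fun k hk => ((one_le_pow₀ one_le_two).trans hk).not_gt hr
    simp [hempty]
  · have hsub : {k : ℕ | (2 : ℝ) ^ k ≤ r} ⊆ Finset.range (⌊Real.logb 2 r⌋₊ + 1) := fun k hk => by
      simp only [Finset.coe_range, mem_Iio, Nat.lt_succ_iff]
      refine Nat.le_floor ((Real.le_logb_iff_rpow_le one_lt_two (by linarith)).2 ?_)
      exact_mod_cast hk
    have hfloor : (⌊Real.logb 2 r⌋₊ : ℝ) ≤ Real.logb 2 (1 + r) :=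
      (Nat.floor_le (Real.logb_nonneg one_lt_two hr)).trans
        (Real.logb_le_logb_of_le one_lt_two (by linarith) (by linarith))
    have hone : 1 ≤ Real.logb 2 (1 + r) := by
      rw [Real.le_logb_iff_rpow_le one_lt_two (by linarith), Real.rpow_one]
      linarith
    calc Measure.count {k : ℕ | (2 : ℝ) ^ k ≤ r}
        ≤ Measure.count (Finset.range (⌊Real.logb 2 r⌋₊ + 1) : Set ℕ) := measure_mono hsub
      _ = ENNReal.ofReal (⌊Real.logb 2 r⌋₊ + 1) := by
          rw [Measure.count_apply_finset, Finset.card_range, ← ENNReal.ofReal_natCast]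
          push_cast
          rfl
      _ ≤ ENNReal.ofReal (2 * Real.logb 2 (1 + r)) := ENNReal.ofReal_le_ofReal (by linarith)

lemma count_lt_apply_two_pow_le (hα : Tendsto α atTop (nhds 0)) (hy : 0 < y) :
    Measure.count {k : ℕ | y < α (2 ^ k)}
      ≤ ENNReal.ofReal (2 * Real.logb 2 (1 + rcInv (alphaExt α) (y / 2))) := by
  refine (measure_mono fun k (hk : y < α (2 ^ k)) => ?_).trans (count_two_pow_le_le _)
  refine le_rcInv (tendsto_alphaExt hα) (half_pos hy) (by positivity) ?_
  have hext : alphaExt α (2 ^ k) = α (2 ^ k) :=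
    mod_cast alphaExt_natCast (α := α) Nat.one_le_two_pow
  rw [hext]
  linarith

lemma lintegral_lintegral_ofReal_min [SFinite ν] {f : K → ℝ} {g : S → ℝ}
    (hf : Measurable f) (hg : Measurable g) (hf0 : 0 ≤ f) (hg0 : 0 ≤ g) :
    ∫⁻ k, ∫⁻ s, ENNReal.ofReal (min (f k) (g s)) ∂ν ∂μ
      = ∫⁻ y in Ioi 0, μ {k | y < f k} * ν {s | y < g s} := by
  have hmin : Measurable fun z : K × S => min (f z.1) (g z.2) :=
    (hf.comp measurable_fst).min (hg.comp measurable_snd)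
  calc ∫⁻ k, ∫⁻ s, ENNReal.ofReal (min (f k) (g s)) ∂ν ∂μ
      = ∫⁻ z, ENNReal.ofReal (min (f z.1) (g z.2)) ∂μ.prod ν :=
        (lintegral_prod _ hmin.ennreal_ofReal.aemeasurable).symm
    _ = ∫⁻ y in Ioi 0, (μ.prod ν) {z | y < min (f z.1) (g z.2)} :=
        lintegral_eq_lintegral_meas_lt _ (ae_of_all _ fun z => le_min (hf0 z.1) (hg0 z.2))
          hmin.aemeasurable
    _ = ∫⁻ y in Ioi 0, μ {k | y < f k} * ν {s | y < g s} := by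
        simp only [lt_min_iff, ← Measure.prod_prod]
        rfl

/-- The survival function of `Y`. -/
noncomputable def tailProb {Ω : Type*} [MeasurableSpace Ω] (P : Measure Ω) (Y : Ω → ℝ) (s : ℝ) :
    ℝ :=
  P.real {ω | s < Y ω}

variable {Ω : Type*} [MeasurableSpace Ω] {P : Measure Ω} {Y : Ω → ℝ}

lemma antitone_tailProb [IsFiniteMeasure P] : Antitone (tailProb P Y) := fun _ _ hst =>
  measureReal_mono fun _ hω => lt_of_le_of_lt hst hω

lemma lintegral_tailProb_ne_top [IsFiniteMeasure P] (hY : Integrable Y P) (hY0 : ∀ ω, 0 ≤ Y ω) :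
    ∫⁻ s in Ioi 0, ENNReal.ofReal (tailProb P Y s) ≠ ⊤ := by
  simp only [tailProb, ofReal_measureReal (measure_ne_top P _)]
  rw [← lintegral_eq_lintegral_meas_lt P (ae_of_all _ hY0) hY.aemeasurable]
  exact hY.lintegral_lt_top.ne

lemma tailProb_eq_one_sub_distFun [IsProbabilityMeasure P] (hY : Measurable Y) :
    tailProb P Y = fun s => 1 - distFun P Y s := by
  funext s
  have hcompl : {ω | s < Y ω} = {ω | Y ω ≤ s}ᶜ := by
    ext ω
    simp
  rw [tailProb, hcompl, probReal_compl_eq_one_sub (measurableSet_le hY measurable_const)]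
  rfl

lemma tendsto_tailProb [IsProbabilityMeasure P] (hY : Measurable Y) :
    Tendsto (tailProb P Y) atTop (nhds 0) := by
  have : IsProbabilityMeasure (P.map Y) := Measure.isProbabilityMeasure_map hY.aemeasurable
  have hcdf (s : ℝ) : ProbabilityTheory.cdf (P.map Y) s = distFun P Y s := by
    rw [ProbabilityTheory.cdf_eq_real, map_measureReal_apply hY measurableSet_Iic]
    rfl
  have h := (ProbabilityTheory.tendsto_cdf_atTop (P.map Y)).const_sub 1
  simpa only [hcdf, sub_self, ← tailProb_eq_one_sub_distFun hY] using h

lemma tsum_lintegral_min_tailProb_ne_top [IsProbabilityMeasure P] (hY : Measurable Y)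
    (hα : Tendsto α atTop (nhds 0)) (hα0 : ∀ n, 0 ≤ α n)
    (hcond : IntegrableOn (fun y => Real.log (1 + rcInv (alphaExt α) (y / 2)) *
      rcInv (tailProb P Y) y) (Ioo 0 1)) :
    ∑' k : ℕ, ∫⁻ s in Ioi 0, ENNReal.ofReal (min (α (2 ^ k)) (tailProb P Y s)) ≠ ⊤ := by
  refine LT.lt.ne ?_
  have tail_zero (y : ℝ) (hy : y ∈ Ici (1 : ℝ)) : {s | y < tailProb P Y s} = ∅ :=
    eq_empty_of_forall_notMem fun s hs => (measureReal_le_one.trans hy).not_gt hs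
  calc ∑' k : ℕ, ∫⁻ s in Ioi 0, ENNReal.ofReal (min (α (2 ^ k)) (tailProb P Y s))
      = ∫⁻ y in Ioi 0, Measure.count {k : ℕ | y < α (2 ^ k)} *
          volume.restrict (Ioi 0) {s | y < tailProb P Y s} := by
        rw [← lintegral_count, lintegral_lintegral_ofReal_min measurable_from_top
          antitone_tailProb.measurable (fun k => hα0 _) fun s => measureReal_nonneg]
    _ = ∫⁻ y in Ioo 0 1, Measure.count {k : ℕ | y < α (2 ^ k)} *
          volume.restrict (Ioi 0) {s | y < tailProb P Y s} := by
        rw [← Ioo_union_Ici_eq_Ioi zero_lt_one, lintegral_union measurableSet_Ici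
          (disjoint_left.2 fun y hy hy' => hy.2.not_ge hy'),
          setLIntegral_eq_zero measurableSet_Ici fun y hy => by simp [tail_zero y hy], add_zero]
    _ ≤ ∫⁻ y in Ioo 0 1, ENNReal.ofReal (2 / Real.log 2 *
          (Real.log (1 + rcInv (alphaExt α) (y / 2)) * rcInv (tailProb P Y) y)) := by
        refine setLIntegral_mono' measurableSet_Ioo fun y hy => ?_
        have hsplit : 2 / Real.log 2 * (Real.log (1 + rcInv (alphaExt α) (y / 2)) *
            rcInv (tailProb P Y) y) =
            2 * Real.logb 2 (1 + rcInv (alphaExt α) (y / 2)) * rcInv (tailProb P Y) y := by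
          rw [Real.logb]
          ring
        rw [hsplit, ENNReal.ofReal_mul' (rcInv_nonneg _ _)]
        exact mul_le_mul' (count_lt_apply_two_pow_le hα hy.1)
          (volume_restrict_setOf_lt_le_rcInv (tendsto_tailProb hY) hy.1)
    _ < ⊤ := (hcond.const_mul (2 / Real.log 2)).lintegral_lt_top

end LogCondition

section GeometricScales

lemma ofReal_mul_le_setLIntegral_Ioc {f : ℝ → ENNReal} (hf : Antitone f) {r ρ : ℝ}
    (hρ : 1 < ρ) :
    ENNReal.ofReal r * f r ≤ ENNReal.ofReal (ρ / (ρ - 1)) * ∫⁻ s in Ioc (r / ρ) r, f s := by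
  have hρ0 : 0 < ρ - 1 := sub_pos.2 hρ
  have hlen : ENNReal.ofReal r = ENNReal.ofReal (ρ / (ρ - 1)) * ENNReal.ofReal (r - r / ρ) := by
    rw [← ENNReal.ofReal_mul (by positivity)]
    congr 1
    field_simp
  calc ENNReal.ofReal r * f r
      = ENNReal.ofReal (ρ / (ρ - 1)) * ∫⁻ _ in Ioc (r / ρ) r, f r := by
        rw [setLIntegral_const, Real.volume_Ioc, hlen]
        ring
    _ ≤ ENNReal.ofReal (ρ / (ρ - 1)) * ∫⁻ s in Ioc (r / ρ) r, f s := by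
        gcongr ENNReal.ofReal (ρ / (ρ - 1)) * ?_
        exact setLIntegral_mono' measurableSet_Ioc fun s hs => hf hs.2

lemma tsum_ofReal_mul_pow_mul_le {f : ℝ → ENNReal} (hf : Antitone f) {q ρ : ℝ} (hq : 0 < q)
    (hρ : 1 < ρ) :
    ∑' j : ℕ, ENNReal.ofReal (q * ρ ^ j) * f (q * ρ ^ j)
      ≤ ENNReal.ofReal (ρ / (ρ - 1)) * ∫⁻ s in Ioi 0, f s := by
  have hmono : Monotone fun j : ℕ => q * ρ ^ j / ρ := fun i j hij => by
    change q * ρ ^ i / ρ ≤ q * ρ ^ j / ρ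
    gcongr
    exact hρ.le
  have hdisj : Pairwise (Function.onFun Disjoint fun j : ℕ => Ioc (q * ρ ^ j / ρ) (q * ρ ^ j)) := by
    convert hmono.pairwise_disjoint_on_Ioc_succ using 3 with j
    rw [Nat.succ_eq_succ, pow_succ, ← mul_assoc, mul_div_cancel_right₀ _ (by positivity)]
  calc ∑' j : ℕ, ENNReal.ofReal (q * ρ ^ j) * f (q * ρ ^ j)
      ≤ ∑' j : ℕ, ENNReal.ofReal (ρ / (ρ - 1)) *
          ∫⁻ s in Ioc (q * ρ ^ j / ρ) (q * ρ ^ j), f s :=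
        ENNReal.tsum_le_tsum fun j => ofReal_mul_le_setLIntegral_Ioc hf hρ
    _ = ENNReal.ofReal (ρ / (ρ - 1)) *
          ∫⁻ s in ⋃ j : ℕ, Ioc (q * ρ ^ j / ρ) (q * ρ ^ j), f s := by
        rw [ENNReal.tsum_mul_left,
          lintegral_iUnion (fun j => measurableSet_Ioc) hdisj]
    _ ≤ ENNReal.ofReal (ρ / (ρ - 1)) * ∫⁻ s in Ioi 0, f s := by
        gcongr
        refine iUnion_subset fun j s hs => ?_
        exact (by positivity : 0 ≤ q * ρ ^ j / ρ).trans_lt hs.1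

lemma sq_sum_range_le_mul_sum_pow_mul_sq {r : ℝ} (hr : 1 < r) (a : ℕ → ℝ) (n : ℕ) :
    (∑ k ∈ Finset.range n, a k) ^ 2 ≤ r / (r - 1) * ∑ k ∈ Finset.range n, r ^ k * a k ^ 2 := by
  have hr0 : 0 < r := one_pos.trans hr
  have hgeom : ∑ k ∈ Finset.range n, r⁻¹ ^ k ≤ r / (r - 1) := by
    have hr1 : 0 < r - 1 := sub_pos.2 hr
    calc ∑ k ∈ Finset.range n, r⁻¹ ^ k ≤ r⁻¹ ^ 0 / (1 - r⁻¹) := by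
          rw [Finset.range_eq_Ico]
          exact geom_sum_Ico_le_of_lt_one (inv_nonneg.2 hr0.le) (inv_lt_one_of_one_lt₀ hr)
      _ = r / (r - 1) := by field_simp
  calc (∑ k ∈ Finset.range n, a k) ^ 2
      ≤ (∑ k ∈ Finset.range n, r⁻¹ ^ k) * ∑ k ∈ Finset.range n, r ^ k * a k ^ 2 :=
        Finset.sum_sq_le_sum_mul_sum_of_sq_le_mul _ (fun k _ => by positivity)
          (fun k _ => by positivity) fun k _ => by
            rw [inv_pow, inv_mul_cancel_left₀ (by positivity)]
    _ ≤ r / (r - 1) * ∑ k ∈ Finset.range n, r ^ k * a k ^ 2 := by gcongr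

lemma ae_tendsto_sum_range_of_tsum_ne_top {Ω : Type*} [MeasurableSpace Ω] {P : Measure Ω}
    {x : ℕ → ℕ → Ω → ℝ} (hx0 : ∀ k j ω, 0 ≤ x k j ω) (hx : ∀ k j, AEMeasurable (x k j) P)
    (hsum : ∑' k, ∑' j, ∫⁻ ω, ENNReal.ofReal (x k j ω) ∂P ≠ ⊤) :
    ∀ᵐ ω ∂P, Tendsto (fun j => ∑ k ∈ Finset.range j, x k j ω) atTop (nhds 0) := by
  have hmeas (j : ℕ) : AEMeasurable (fun ω => ∑' k, ENNReal.ofReal (x k j ω)) P :=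
    AEMeasurable.tsum fun k => (hx k j).ennreal_ofReal
  have hlint : ∫⁻ ω, ∑' j, ∑' k, ENNReal.ofReal (x k j ω) ∂P ≠ ⊤ := by
    rw [lintegral_tsum hmeas]
    simp_rw [lintegral_tsum fun k => (hx k _).ennreal_ofReal]
    rwa [ENNReal.tsum_comm]
  filter_upwards [ae_lt_top' (AEMeasurable.tsum hmeas) hlint] with ω hω
  have hzero : Tendsto (fun j => (∑' k, ENNReal.ofReal (x k j ω)).toReal) atTop (nhds 0) :=
    (ENNReal.tendsto_toReal ENNReal.zero_ne_top).comp
      (ENNReal.tendsto_atTop_zero_of_tsum_ne_top hω.ne)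
  refine squeeze_zero (fun j => Finset.sum_nonneg fun k _ => hx0 k j ω) (fun j => ?_) hzero
  rw [← ENNReal.ofReal_le_iff_le_toReal (ENNReal.ne_top_of_tsum_ne_top hω.ne j),
    ENNReal.ofReal_sum_of_nonneg fun k _ => hx0 k j ω]
  exact ENNReal.sum_le_tsum _

end GeometricScales

section Layer

/-- The part of `x` between the heights `(1 / 4) ^ (k + 1) * M` and `(1 / 4) ^ k * M`. -/
noncomputable def layer (M : ℝ) (k : ℕ) (x : ℝ) : ℝ :=
  min x ((1 / 4) ^ k * M) - min x ((1 / 4) ^ (k + 1) * M)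

lemma measurable_layer (M : ℝ) (k : ℕ) : Measurable (layer M k) :=
  (measurable_id.min measurable_const).sub (measurable_id.min measurable_const)

lemma sum_range_layer (M x : ℝ) (j : ℕ) :
    ∑ k ∈ Finset.range j, layer M k x = min x M - min x ((1 / 4) ^ j * M) := by
  simp only [layer]
  rw [Finset.sum_range_sub' fun k => min x ((1 / 4) ^ k * M), pow_zero, one_mul]

lemma layer_mem_Icc {M x : ℝ} (hM : 0 ≤ M) (hx : 0 ≤ x) (k : ℕ) :
    layer M k x ∈ Icc 0 ((1 / 4) ^ k * M) := by
  have height_le : (1 / 4) ^ (k + 1) * M ≤ (1 / 4) ^ k * M :=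
    mul_le_mul_of_nonneg_right (pow_le_pow_of_le_one (by norm_num) (by norm_num) k.le_succ) hM
  have min_nonneg : 0 ≤ min x ((1 / 4) ^ (k + 1) * M) := le_min hx (by positivity)
  exact ⟨sub_nonneg.2 (min_le_min_left _ height_le),
    (sub_le_self _ min_nonneg).trans (min_le_right _ _)⟩

lemma layer_eq_zero {M x : ℝ} {k : ℕ} (hM : 0 ≤ M) (hx : x ≤ (1 / 4) ^ (k + 1) * M) :
    layer M k x = 0 := by
  have height_le : (1 / 4) ^ (k + 1) * M ≤ (1 / 4) ^ k * M :=
    mul_le_mul_of_nonneg_right (pow_le_pow_of_le_one (by norm_num) (by norm_num) k.le_succ) hM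
  rw [layer, min_eq_left (hx.trans height_le), min_eq_left hx, sub_self]

variable {Ω : Type*} [MeasurableSpace Ω] {P : Measure Ω} [IsFiniteMeasure P] {Y : Ω → ℝ}

lemma integral_layer_le (hY : Measurable Y) (hY0 : ∀ ω, 0 ≤ Y ω) {M : ℝ} (hM : 0 ≤ M) (k : ℕ) :
    ∫ ω, layer M k (Y ω) ∂P ≤ (1 / 4) ^ k * M * tailProb P Y ((1 / 4) ^ (k + 1) * M) := by
  have hset : MeasurableSet {ω | (1 / 4) ^ (k + 1) * M < Y ω} :=
    measurableSet_lt measurable_const hY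
  calc ∫ ω, layer M k (Y ω) ∂P
      ≤ ∫ ω, {ω | (1 / 4) ^ (k + 1) * M < Y ω}.indicator (fun _ => (1 / 4) ^ k * M) ω ∂P := by
        refine integral_mono ?_ ((integrable_const _).indicator hset) <|
          le_indicator (fun ω _ => (layer_mem_Icc hM (hY0 ω) k).2)
            fun ω hω => (layer_eq_zero hM (not_lt.1 hω)).le
        exact Integrable.of_mem_Icc 0 ((1 / 4) ^ k * M)
          ((measurable_layer M k).comp hY).aemeasurable
          (ae_of_all _ fun ω => layer_mem_Icc hM (hY0 ω) k)
    _ = (1 / 4) ^ k * M * tailProb P Y ((1 / 4) ^ (k + 1) * M) := by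
        rw [integral_indicator_const _ hset, smul_eq_mul, mul_comm, tailProb]

end Layer

section Truncation

variable {Ω : Type*} [MeasurableSpace Ω] {P : Measure Ω}

lemma tendsto_integral_min_atTop {Y : Ω → ℝ} (hY : Integrable Y P) :
    Tendsto (fun M => ∫ ω, min (Y ω) M ∂P) atTop (nhds (∫ ω, Y ω ∂P)) := by
  refine tendsto_integral_filter_of_dominated_convergence (fun ω => |Y ω|)
    (.of_forall fun M => hY.aestronglyMeasurable.inf aestronglyMeasurable_const) ?_ hY.abs
    (ae_of_all _ fun ω => ?_)
  · filter_upwards [eventually_ge_atTop 0] with M hM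
    refine ae_of_all _ fun ω => abs_le.2 ⟨le_min (neg_abs_le _) ?_, ?_⟩
    · exact (neg_nonpos.2 (abs_nonneg _)).trans hM
    · exact (min_le_left _ _).trans (le_abs_self _)
  · exact tendsto_const_nhds.congr' <|
      (eventually_ge_atTop (Y ω)).mono fun M hM => (min_eq_left hM).symm

/-- The centred partial sum of the process `X` truncated at height `M`. -/
noncomputable def truncSum (P : Measure Ω) (X : ℕ → Ω → ℝ) (M : ℝ) (n : ℕ) (ω : Ω) : ℝ :=
  ∑ i ∈ Finset.range n, (min (X i ω) M - ∫ ω', min (X i ω') M ∂P)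

lemma abs_truncSum_le [IsProbabilityMeasure P] {X : ℕ → Ω → ℝ} (hX : ∀ i, Integrable (X i) P)
    (hX0 : ∀ i ω, 0 ≤ X i ω) {M : ℝ} (hM : 0 ≤ M) (n : ℕ) (ω : Ω) :
    |truncSum P X M n ω| ≤ n * M := by
  have abs_term_le (i : ℕ) : |min (X i ω) M - ∫ ω', min (X i ω') M ∂P| ≤ M := by
    have mean_nonneg : 0 ≤ ∫ ω', min (X i ω') M ∂P :=
      integral_nonneg fun ω' => le_min (hX0 i ω') hM
    have mean_le : ∫ ω', min (X i ω') M ∂P ≤ M := by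
      simpa using integral_mono ((hX i).inf (integrable_const M)) (integrable_const (μ := P) M)
        fun ω' => min_le_right (X i ω') M
    exact abs_sub_le_of_nonneg_of_le (le_min (hX0 i ω) hM) (min_le_right _ _) mean_nonneg mean_le
  calc |truncSum P X M n ω|
      ≤ ∑ i ∈ Finset.range n, |min (X i ω) M - ∫ ω', min (X i ω') M ∂P| :=
        Finset.abs_sum_le_sum_abs _ _
    _ ≤ ∑ _i ∈ Finset.range n, M := Finset.sum_le_sum fun i _ => abs_term_le i
    _ = n * M := by simp

/-- The innovations, with gap `2 ^ k`, of the `k`-th layer of `X`, summed over `i < n` and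
divided by `M`. -/
noncomputable def layerInnovation (P : Measure Ω) (X : ℕ → Ω → ℝ) (M : ℝ) (n k : ℕ) (ω : Ω) : ℝ :=
  (∑ i ∈ Finset.range n, innovation P (fun i ω => layer M k (X i ω)) (2 ^ k) i ω) / M

/-- The drifts, with gap `2 ^ k`, of the `k`-th layer of `X`, summed over `i < n` and
divided by `M`. -/
noncomputable def layerDrift (P : Measure Ω) (X : ℕ → Ω → ℝ) (M : ℝ) (n k : ℕ) (ω : Ω) : ℝ :=
  (∑ i ∈ Finset.range n, drift P (fun i ω => layer M k (X i ω)) (2 ^ k) i ω) / M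

lemma truncSum_div_eq [IsFiniteMeasure P] {X : ℕ → Ω → ℝ} (hX : ∀ i, Integrable (X i) P)
    (M : ℝ) (n j : ℕ) (ω : Ω) :
    truncSum P X M n ω / M = ∑ k ∈ Finset.range j, layerInnovation P X M n k ω
      + ∑ k ∈ Finset.range j, layerDrift P X M n k ω
      + truncSum P X ((1 / 4) ^ j * M) n ω / M := by
  have integrable_min (i : ℕ) (c : ℝ) : Integrable (fun ω => min (X i ω) c) P :=
    (hX i).inf (integrable_const c)
  have integrable_layer (i k : ℕ) : Integrable (fun ω => layer M k (X i ω)) P :=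
    (integrable_min i _).sub (integrable_min i _)
  have sum_layer (i : ℕ) :
      ∑ k ∈ Finset.range j, (layer M k (X i ω) - ∫ ω', layer M k (X i ω') ∂P)
        = min (X i ω) M - ∫ ω', min (X i ω') M ∂P
          - (min (X i ω) ((1 / 4) ^ j * M) - ∫ ω', min (X i ω') ((1 / 4) ^ j * M) ∂P) := by
    rw [Finset.sum_sub_distrib, ← integral_finsetSum _ fun k _ => integrable_layer i k]
    simp only [sum_range_layer]
    rw [integral_sub (integrable_min i _) (integrable_min i _)]
    ring
  simp only [layerInnovation, layerDrift, innovation, drift]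
  rw [← Finset.sum_add_distrib]
  simp only [← add_div, ← Finset.sum_add_distrib, sub_add_sub_cancel]
  rw [← Finset.sum_div, Finset.sum_comm, ← add_div]
  simp only [sum_layer, truncSum, Finset.sum_sub_distrib]
  ring_nf

end Truncation

section LayerBounds

open ProbabilityTheory

variable {Ω : Type*} [MeasurableSpace Ω] {P : Measure Ω} [IsProbabilityMeasure P]
  {X : ℕ → Ω → ℝ} {α : ℕ → ℝ}

lemma measurable_layer_comp (hmeas : ∀ i, Measurable (X i)) (M : ℝ) (k i : ℕ) :
    Measurable fun ω => layer M k (X i ω) :=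
  (measurable_layer M k).comp (hmeas i)

lemma integral_layer_comp_le (hmeas : ∀ i, Measurable (X i)) (hX0 : ∀ i ω, 0 ≤ X i ω)
    (hident : ∀ i, IdentDistrib (X i) (X 0) P P) {M : ℝ} (hM : 0 ≤ M) (k i : ℕ) :
    ∫ ω, layer M k (X i ω) ∂P
      ≤ (1 / 4) ^ k * M * tailProb P (X 0) ((1 / 4) ^ (k + 1) * M) :=
  ((hident i).comp (measurable_layer M k)).integral_eq.trans_le
    (integral_layer_le (hmeas 0) (hX0 0) hM k)

lemma memLp_layerInnovation (hmeas : ∀ i, Measurable (X i)) (hX0 : ∀ i ω, 0 ≤ X i ω)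
    {M : ℝ} (hM : 0 ≤ M) (n k : ℕ) : MemLp (layerInnovation P X M n k) 2 P := by
  have memLp_layer (i : ℕ) : MemLp (fun ω => layer M k (X i ω)) 2 P :=
    memLp_of_bounded (ae_of_all _ fun ω => layer_mem_Icc hM (hX0 i ω) k)
      (measurable_layer_comp hmeas M k i).aestronglyMeasurable 2
  exact ((memLp_finsetSum _ fun i _ => memLp_innovation memLp_layer _ i).mul_const M⁻¹).ae_eq
    (ae_of_all _ fun ω => (div_eq_mul_inv _ _).symm)

lemma integrable_layerDrift (M : ℝ) (n k : ℕ) : Integrable (layerDrift P X M n k) P :=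
  (integrable_finsetSum _ fun i _ => integrable_drift _ i).div_const M

lemma lintegral_sq_layerInnovation_le (hmeas : ∀ i, Measurable (X i)) (hX0 : ∀ i ω, 0 ≤ X i ω)
    (hident : ∀ i, IdentDistrib (X i) (X 0) P P) {M : ℝ} (hM : 0 < M) {n : ℕ} (hn : n ≤ M)
    (k : ℕ) :
    ∫⁻ ω, ENNReal.ofReal (layerInnovation P X M n k ω ^ 2) ∂P
      ≤ ENNReal.ofReal (8 * (1 / 2) ^ k) * (ENNReal.ofReal ((1 / 4) ^ (k + 1) * M) *
        ENNReal.ofReal (tailProb P (X 0) ((1 / 4) ^ (k + 1) * M))) := by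
  set g := tailProb P (X 0) ((1 / 4) ^ (k + 1) * M)
  have hg : 0 ≤ g := measureReal_nonneg
  have sum_le := integral_sq_sum_innovation_le (measurable_layer_comp hmeas M k)
    (fun i ω => layer_mem_Icc hM.le (hX0 i ω) k)
    (fun i => mul_le_mul_of_nonneg_left (integral_layer_comp_le hmeas hX0 hident hM.le k i)
      (by positivity : 0 ≤ (1 / 4) ^ k * M)) (2 ^ k) n
  rw [← ofReal_integral_eq_lintegral_ofReal
      (memLp_layerInnovation hmeas hX0 hM.le n k).integrable_sq
      (ae_of_all _ fun ω => sq_nonneg _),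
    ← ENNReal.ofReal_mul (by positivity), ← ENNReal.ofReal_mul (by positivity)]
  refine ENNReal.ofReal_le_ofReal ?_
  calc ∫ ω, layerInnovation P X M n k ω ^ 2 ∂P
      ≤ n * (2 * (2 ^ k : ℕ) * ((1 / 4) ^ k * M * ((1 / 4) ^ k * M * g))) / M ^ 2 := by
        simp only [layerInnovation, div_pow _ M]
        rw [integral_div]
        gcongr
    _ ≤ M * (2 * 2 ^ k * ((1 / 4) ^ k * M * ((1 / 4) ^ k * M * g))) / M ^ 2 := by
        push_cast
        gcongr
    _ = 8 * (2 * (1 / 4)) ^ k * ((1 / 4) ^ (k + 1) * M * g) := by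
        rw [mul_pow]
        field_simp
        ring
    _ = 8 * (1 / 2) ^ k * ((1 / 4) ^ (k + 1) * M * g) := by norm_num

lemma lintegral_abs_layerDrift_le (hmeas : ∀ i, Measurable (X i)) (hX0 : ∀ i ω, 0 ≤ X i ω)
    (hident : ∀ i, IdentDistrib (X i) (X 0) P P) (hα : AlphaMixingBound P X α) {M : ℝ}
    (hM : 0 < M) {n : ℕ} (hn : n ≤ M) (k : ℕ) :
    ∫⁻ ω, ENNReal.ofReal |layerDrift P X M n k ω| ∂P
      ≤ 8 * (ENNReal.ofReal ((1 / 4) ^ (k + 1) * M) *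
        ENNReal.ofReal (min (α (2 ^ k)) (tailProb P (X 0) ((1 / 4) ^ (k + 1) * M)))) := by
  set g := tailProb P (X 0) ((1 / 4) ^ (k + 1) * M)
  have hv : 0 ≤ min (α (2 ^ k)) g := le_min (hα.nonneg _) measureReal_nonneg
  have sum_le := integral_abs_sum_drift_le (measurable_layer_comp hmeas M k)
    (fun i ω => layer_mem_Icc hM.le (hX0 i ω) k) (by positivity) (hα.comp (measurable_layer M k))
    (integral_layer_comp_le hmeas hX0 hident hM.le k) (2 ^ k) n
  rw [← mul_min_of_nonneg _ _ (by positivity)] at sum_le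
  rw [← ofReal_integral_eq_lintegral_ofReal (integrable_layerDrift M n k).abs
      (ae_of_all _ fun ω => abs_nonneg _),
    ← ENNReal.ofReal_mul (by positivity), ← ENNReal.ofReal_ofNat,
    ← ENNReal.ofReal_mul (by positivity)]
  refine ENNReal.ofReal_le_ofReal ?_
  calc ∫ ω, |layerDrift P X M n k ω| ∂P
      ≤ n * (2 * ((1 / 4) ^ k * M * min (α (2 ^ k)) g)) / M := by
        simp only [layerDrift, abs_div, abs_of_pos hM]
        rw [integral_div]
        gcongr
    _ ≤ M * (2 * ((1 / 4) ^ k * M * min (α (2 ^ k)) g)) / M := by gcongr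
    _ = 8 * ((1 / 4) ^ (k + 1) * M * min (α (2 ^ k)) g) := by
        field_simp
        ring

-- Any weight `r ^ k` with `1 < r < 2` would do: the second moments decay like `2 ^ (-k)`, and
-- Cauchy–Schwarz over the layers needs `∑ r ^ (-k) < ∞`.
lemma ae_tendsto_sum_sq_layerInnovation (hmeas : ∀ i, Measurable (X i))
    (hX0 : ∀ i ω, 0 ≤ X i ω) (hident : ∀ i, IdentDistrib (X i) (X 0) P P)
    (hX : Integrable (X 0) P) {ρ : ℝ} (hρ : 1 < ρ) :
    ∀ᵐ ω ∂P, Tendsto (fun j => ∑ k ∈ Finset.range j,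
      (3 / 2) ^ k * layerInnovation P X (ρ ^ j) ⌊ρ ^ j⌋₊ k ω ^ 2) atTop (nhds 0) := by
  have hpow (j : ℕ) : 0 < ρ ^ j := pow_pos (one_pos.trans hρ) j
  refine ae_tendsto_sum_range_of_tsum_ne_top
    (x := fun k j ω => (3 / 2) ^ k * layerInnovation P X (ρ ^ j) ⌊ρ ^ j⌋₊ k ω ^ 2)
    (fun k j ω => by positivity) (fun k j => ?_) ?_
  · exact ((memLp_layerInnovation hmeas hX0 (hpow j).le _ k).integrable_sq.const_mul
      _).aemeasurable
  set T := ∫⁻ s in Ioi 0, ENNReal.ofReal (tailProb P (X 0) s)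
  have layer_le (k : ℕ) :
      ∑' j, ∫⁻ ω, ENNReal.ofReal ((3 / 2) ^ k * layerInnovation P X (ρ ^ j) ⌊ρ ^ j⌋₊ k ω ^ 2) ∂P
        ≤ ENNReal.ofReal (8 * (3 / 4) ^ k) * (ENNReal.ofReal (ρ / (ρ - 1)) * T) := by
    have weight : (8 * (3 / 4) ^ k : ℝ) = (3 / 2) ^ k * (8 * (1 / 2) ^ k) := by
      rw [mul_left_comm, ← mul_pow]
      norm_num
    rw [weight, ENNReal.ofReal_mul (by positivity), mul_assoc]
    simp only [ENNReal.ofReal_mul (by positivity : (0 : ℝ) ≤ (3 / 2) ^ k),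
      lintegral_const_mul' _ _ ENNReal.ofReal_ne_top, ENNReal.tsum_mul_left]
    gcongr
    refine (ENNReal.tsum_le_tsum fun j => lintegral_sq_layerInnovation_le hmeas hX0 hident
      (hpow j) (Nat.floor_le (hpow j).le) k).trans ?_
    rw [ENNReal.tsum_mul_left]
    gcongr
    exact tsum_ofReal_mul_pow_mul_le
      (fun s t hst => ENNReal.ofReal_le_ofReal (antitone_tailProb hst)) (by positivity) hρ
  refine ne_top_of_le_ne_top ?_ (ENNReal.tsum_le_tsum layer_le)
  rw [ENNReal.tsum_mul_right]
  refine ENNReal.mul_ne_top ?_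
    (ENNReal.mul_ne_top ENNReal.ofReal_ne_top (lintegral_tailProb_ne_top hX (hX0 0)))
  exact ((summable_geometric_of_lt_one (by norm_num) (by norm_num)).mul_left 8).tsum_ofReal_ne_top

lemma ae_tendsto_sum_abs_layerDrift (hmeas : ∀ i, Measurable (X i)) (hX0 : ∀ i ω, 0 ≤ X i ω)
    (hident : ∀ i, IdentDistrib (X i) (X 0) P P) (hα : AlphaMixingBound P X α)
    (hsum : ∑' k, ∫⁻ s in Ioi 0, ENNReal.ofReal (min (α (2 ^ k)) (tailProb P (X 0) s)) ≠ ⊤)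
    {ρ : ℝ} (hρ : 1 < ρ) :
    ∀ᵐ ω ∂P, Tendsto (fun j => ∑ k ∈ Finset.range j,
      |layerDrift P X (ρ ^ j) ⌊ρ ^ j⌋₊ k ω|) atTop (nhds 0) := by
  have hpow (j : ℕ) : 0 < ρ ^ j := pow_pos (one_pos.trans hρ) j
  refine ae_tendsto_sum_range_of_tsum_ne_top
    (x := fun k j ω => |layerDrift P X (ρ ^ j) ⌊ρ ^ j⌋₊ k ω|)
    (fun k j ω => abs_nonneg _) (fun k j => (integrable_layerDrift _ _ k).abs.aemeasurable) ?_
  have layer_le (k : ℕ) :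
      ∑' j, ∫⁻ ω, ENNReal.ofReal |layerDrift P X (ρ ^ j) ⌊ρ ^ j⌋₊ k ω| ∂P
        ≤ 8 * (ENNReal.ofReal (ρ / (ρ - 1)) *
          ∫⁻ s in Ioi 0, ENNReal.ofReal (min (α (2 ^ k)) (tailProb P (X 0) s))) := by
    refine (ENNReal.tsum_le_tsum fun j => lintegral_abs_layerDrift_le hmeas hX0 hident hα
      (hpow j) (Nat.floor_le (hpow j).le) k).trans ?_
    rw [ENNReal.tsum_mul_left]
    gcongr
    exact tsum_ofReal_mul_pow_mul_le
      (f := fun s => ENNReal.ofReal (min (α (2 ^ k)) (tailProb P (X 0) s)))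
      (fun s t hst => ENNReal.ofReal_le_ofReal (min_le_min_left _ (antitone_tailProb hst)))
      (by positivity) hρ
  refine ne_top_of_le_ne_top ?_ (ENNReal.tsum_le_tsum layer_le)
  simp only [ENNReal.tsum_mul_left]
  exact ENNReal.mul_ne_top (by norm_num) (ENNReal.mul_ne_top ENNReal.ofReal_ne_top hsum)

end LayerBounds

section StrongLaw

open ProbabilityTheory

variable {Ω : Type*} [MeasurableSpace Ω] {P : Measure Ω} [IsProbabilityMeasure P]
  {X ξ : ℕ → Ω → ℝ} {α : ℕ → ℝ}

lemma abs_truncSum_div_le (hX : ∀ i, Integrable (X i) P) (hX0 : ∀ i ω, 0 ≤ X i ω) {M : ℝ}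
    (hM : 0 < M) {n : ℕ} (hn : n ≤ M) (j : ℕ) (ω : Ω) :
    |truncSum P X M n ω / M|
      ≤ √(3 * ∑ k ∈ Finset.range j, (3 / 2) ^ k * layerInnovation P X M n k ω ^ 2)
        + ∑ k ∈ Finset.range j, |layerDrift P X M n k ω| + (1 / 4) ^ j * M := by
  rw [truncSum_div_eq hX M n j ω]
  refine (abs_add_three _ _ _).trans (add_le_add_three ?_ (Finset.abs_sum_le_sum_abs _ _) ?_)
  · refine Real.abs_le_sqrt ((sq_sum_range_le_mul_sum_pow_mul_sq
      (by norm_num : (1 : ℝ) < 3 / 2) _ j).trans_eq ?_)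
    norm_num
  · rw [abs_div, abs_of_pos hM, div_le_iff₀ hM]
    refine (abs_truncSum_le hX hX0 (by positivity) n ω).trans ?_
    rw [mul_comm (n : ℝ)]
    exact mul_le_mul_of_nonneg_left hn (by positivity)

lemma ae_tendsto_truncSum_div_pow (hmeas : ∀ i, Measurable (X i)) (hX0 : ∀ i ω, 0 ≤ X i ω)
    (hident : ∀ i, IdentDistrib (X i) (X 0) P P) (hX : Integrable (X 0) P)
    (hα : AlphaMixingBound P X α)
    (hsum : ∑' k, ∫⁻ s in Ioi 0, ENNReal.ofReal (min (α (2 ^ k)) (tailProb P (X 0) s)) ≠ ⊤)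
    {ρ : ℝ} (hρ : 1 < ρ) (hρ4 : ρ < 4) :
    ∀ᵐ ω ∂P, Tendsto (fun j => truncSum P X (ρ ^ j) ⌊ρ ^ j⌋₊ ω / ρ ^ j) atTop (nhds 0) := by
  have hpow (j : ℕ) : 0 < ρ ^ j := pow_pos (one_pos.trans hρ) j
  filter_upwards [ae_tendsto_sum_sq_layerInnovation hmeas hX0 hident hX hρ,
    ae_tendsto_sum_abs_layerDrift hmeas hX0 hident hα hsum hρ] with ω innovation_lim drift_lim
  have remainder_lim : Tendsto (fun j : ℕ => (1 / 4) ^ j * ρ ^ j) atTop (nhds 0) := by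
    simp only [← mul_pow]
    exact tendsto_pow_atTop_nhds_zero_of_lt_one (by linarith) (by linarith)
  have bound_lim := ((innovation_lim.const_mul 3).sqrt.add drift_lim).add remainder_lim
  simp only [mul_zero, Real.sqrt_zero, add_zero] at bound_lim
  exact squeeze_zero_norm (fun j => abs_truncSum_div_le (fun i => (hident i).integrable_iff.2 hX)
    hX0 (hpow j) (Nat.floor_le (hpow j).le) j ω) bound_lim

lemma ae_eventually_forall_lt_floor_pow_le (hX0 : ∀ i ω, 0 ≤ X i ω)
    (hident : ∀ i, IdentDistrib (X i) (X 0) P P) (hX : Integrable (X 0) P) {ρ : ℝ}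
    (hρ : 1 < ρ) :
    ∀ᵐ ω ∂P, ∀ᶠ j : ℕ in atTop, ∀ i < ⌊ρ ^ j⌋₊, X i ω ≤ ρ ^ j := by
  have exceed_le (j : ℕ) : P (⋃ i ∈ Finset.range ⌊ρ ^ j⌋₊, {ω | ρ ^ j < X i ω})
      ≤ ENNReal.ofReal (1 * ρ ^ j) * ENNReal.ofReal (tailProb P (X 0) (1 * ρ ^ j)) := by
    have tail_eq (i : ℕ) : P {ω | ρ ^ j < X i ω} = P {ω | ρ ^ j < X 0 ω} :=
      (hident i).measure_mem_eq measurableSet_Ioi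
    rw [one_mul, tailProb, ofReal_measureReal]
    calc P (⋃ i ∈ Finset.range ⌊ρ ^ j⌋₊, {ω | ρ ^ j < X i ω})
        ≤ ∑ i ∈ Finset.range ⌊ρ ^ j⌋₊, P {ω | ρ ^ j < X i ω} := measure_biUnion_finset_le _ _
      _ = ⌊ρ ^ j⌋₊ * P {ω | ρ ^ j < X 0 ω} := by
          simp only [tail_eq, Finset.sum_const, Finset.card_range, nsmul_eq_mul]
      _ ≤ ENNReal.ofReal (ρ ^ j) * P {ω | ρ ^ j < X 0 ω} := by
          gcongr
          rw [← ENNReal.ofReal_natCast]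
          exact ENNReal.ofReal_le_ofReal (Nat.floor_le (by positivity))
  have exceed_summable : ∑' j : ℕ, P (⋃ i ∈ Finset.range ⌊ρ ^ j⌋₊, {ω | ρ ^ j < X i ω}) ≠ ⊤ := by
    refine ne_top_of_le_ne_top (ENNReal.mul_ne_top ENNReal.ofReal_ne_top
      (lintegral_tailProb_ne_top hX (hX0 0))) <| (ENNReal.tsum_le_tsum exceed_le).trans <|
      tsum_ofReal_mul_pow_mul_le (f := fun s => ENNReal.ofReal (tailProb P (X 0) s))
        (fun s t hst => ENNReal.ofReal_le_ofReal (antitone_tailProb hst)) one_pos hρ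
  filter_upwards [ae_eventually_notMem exceed_summable] with ω hω
  filter_upwards [hω] with j hj i hi
  simp only [mem_iUnion, not_exists] at hj
  exact not_lt.1 (hj i (Finset.mem_range.2 hi))

lemma ae_tendsto_average_floor_pow (hmeas : ∀ i, Measurable (X i)) (hX0 : ∀ i ω, 0 ≤ X i ω)
    (hident : ∀ i, IdentDistrib (X i) (X 0) P P) (hX : Integrable (X 0) P)
    (hα : AlphaMixingBound P X α)
    (hsum : ∑' k, ∫⁻ s in Ioi 0, ENNReal.ofReal (min (α (2 ^ k)) (tailProb P (X 0) s)) ≠ ⊤)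
    {ρ : ℝ} (hρ : 1 < ρ) (hρ4 : ρ < 4) :
    ∀ᵐ ω ∂P, Tendsto (fun j : ℕ => (∑ i ∈ Finset.range ⌊ρ ^ j⌋₊, X i ω) / (⌊ρ ^ j⌋₊ : ℝ))
      atTop (nhds (∫ ω, X 0 ω ∂P)) := by
  have pow_tendsto : Tendsto (fun j : ℕ => ρ ^ j) atTop atTop :=
    tendsto_pow_atTop_atTop_of_one_lt hρ
  have ratio_lim : Tendsto (fun j : ℕ => ρ ^ j / (⌊ρ ^ j⌋₊ : ℝ)) atTop (nhds 1) := by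
    have h := ((tendsto_nat_floor_div_atTop (R := ℝ)).comp pow_tendsto).inv₀ one_ne_zero
    simpa only [Function.comp_def, inv_div, inv_one] using h
  filter_upwards [ae_tendsto_truncSum_div_pow hmeas hX0 hident hX hα hsum hρ hρ4,
    ae_eventually_forall_lt_floor_pow_le hX0 hident hX hρ] with ω trunc_lim eventually_le
  have h := (trunc_lim.mul ratio_lim).add ((tendsto_integral_min_atTop hX).comp pow_tendsto)
  rw [zero_mul, zero_add] at h
  refine h.congr' ?_
  filter_upwards [eventually_le] with j hj
  have hfloor : 0 < ⌊ρ ^ j⌋₊ := Nat.floor_pos.2 (one_le_pow₀ hρ.le)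
  have mean_eq (i : ℕ) : ∫ ω', min (X i ω') (ρ ^ j) ∂P = ∫ ω', min (X 0 ω') (ρ ^ j) ∂P :=
    ((hident i).comp (measurable_id.min measurable_const)).integral_eq
  have truncSum_eq : truncSum P X (ρ ^ j) ⌊ρ ^ j⌋₊ ω
      = ∑ i ∈ Finset.range ⌊ρ ^ j⌋₊, X i ω - ⌊ρ ^ j⌋₊ * ∫ ω', min (X 0 ω') (ρ ^ j) ∂P := by
    simp only [truncSum, mean_eq, Finset.sum_sub_distrib, Finset.sum_const, Finset.card_range,
      nsmul_eq_mul]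
    congr 1
    exact Finset.sum_congr rfl fun i hi => min_eq_left (hj i (Finset.mem_range.1 hi))
  rw [Function.comp_apply, truncSum_eq]
  field_simp
  ring

lemma ae_tendsto_average_of_nonneg (hmeas : ∀ i, Measurable (X i)) (hX0 : ∀ i ω, 0 ≤ X i ω)
    (hident : ∀ i, IdentDistrib (X i) (X 0) P P) (hX : Integrable (X 0) P)
    (hα : AlphaMixingBound P X α)
    (hsum : ∑' k, ∫⁻ s in Ioi 0, ENNReal.ofReal (min (α (2 ^ k)) (tailProb P (X 0) s)) ≠ ⊤) :
    ∀ᵐ ω ∂P, Tendsto (fun n : ℕ => (∑ i ∈ Finset.range n, X i ω) / (n : ℝ))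
      atTop (nhds (∫ ω, X 0 ω ∂P)) := by
  have ratio_gt (k : ℕ) : (1 : ℝ) < 1 + 1 / (k + 1) := lt_add_of_pos_right 1 (by positivity)
  have ratio_lt (k : ℕ) : 1 + 1 / (k + 1 : ℝ) < 4 := by
    have : 1 / (k + 1 : ℝ) ≤ 1 := div_le_one_of_le₀ (by simp) (by positivity)
    linarith
  have ratio_lim : Tendsto (fun k : ℕ => 1 + 1 / (k + 1 : ℝ)) atTop (nhds 1) := by
    simpa using (tendsto_one_div_add_atTop_nhds_zero_nat (𝕜 := ℝ)).const_add 1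
  filter_upwards [ae_all_iff.2 fun k => ae_tendsto_average_floor_pow hmeas hX0 hident hX hα hsum
    (ratio_gt k) (ratio_lt k)] with ω hω
  refine tendsto_div_of_monotone_of_tendsto_div_floor_pow
    (fun n => ∑ i ∈ Finset.range n, X i ω) _ (fun m n hmn => ?_) _ ratio_gt ratio_lim hω
  exact Finset.sum_le_sum_of_subset_of_nonneg (Finset.range_mono hmn) fun i _ _ => hX0 i ω

lemma ae_tendsto_average_comp (hmeas : ∀ i, Measurable (ξ i))
    (hident : ∀ i, IdentDistrib (ξ i) (ξ 0) P P) (hint : Integrable (ξ 0) P)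
    (hα : AlphaMixingBound P ξ α)
    (hsum : ∑' k, ∫⁻ s in Ioi 0,
      ENNReal.ofReal (min (α (2 ^ k)) (tailProb P (fun ω => |ξ 0 ω|) s)) ≠ ⊤)
    {φ : ℝ → ℝ} (hφ : Measurable φ) (hφ0 : ∀ x, 0 ≤ φ x) (hφ1 : ∀ x, φ x ≤ |x|) :
    ∀ᵐ ω ∂P, Tendsto (fun n : ℕ => (∑ i ∈ Finset.range n, φ (ξ i ω)) / (n : ℝ))
      atTop (nhds (∫ ω, φ (ξ 0 ω) ∂P)) := by
  have tail_le (s : ℝ) : tailProb P (fun ω => φ (ξ 0 ω)) s ≤ tailProb P (fun ω => |ξ 0 ω|) s :=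
    measureReal_mono fun ω hω => lt_of_lt_of_le hω (hφ1 _)
  have integrable_comp : Integrable (fun ω => φ (ξ 0 ω)) P :=
    hint.mono (hφ.comp (hmeas 0)).aestronglyMeasurable <| ae_of_all _ fun ω => by
      rw [Real.norm_of_nonneg (hφ0 _)]
      exact hφ1 _
  refine ae_tendsto_average_of_nonneg (X := fun i ω => φ (ξ i ω)) (fun i => hφ.comp (hmeas i))
    (fun i ω => hφ0 _) (fun i => (hident i).comp hφ) integrable_comp (hα.comp hφ) ?_
  refine ne_top_of_le_ne_top hsum (ENNReal.tsum_le_tsum fun k => lintegral_mono fun s => ?_)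
  exact ENNReal.ofReal_le_ofReal (min_le_min_left _ (tail_le s))

theorem rio_slln_alpha_mixing_general (hmeas : ∀ i, Measurable (ξ i))
    (hident : ∀ i, IdentDistrib (ξ i) (ξ 0) P P) (hint : Integrable (ξ 0) P)
    (hα : AlphaMixingBound P ξ α) (hα0 : Tendsto α atTop (nhds 0))
    (hcond : IntegrableOn
      (fun y => Real.log (1 + rcInv (alphaExt α) (y / 2)) *
        rcInv (fun x => 1 - distFun P (fun ω => |ξ 0 ω|) x) y) (Ioo 0 1)) :
    ∀ᵐ ω ∂P, Tendsto
      (fun n : ℕ => (1 / (n : ℝ)) * ∑ i ∈ Finset.range n, (ξ i ω - ∫ ω', ξ i ω' ∂P))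
      atTop (nhds 0) := by
  rw [← tailProb_eq_one_sub_distFun (hmeas 0).abs] at hcond
  have hsum := tsum_lintegral_min_tailProb_ne_top (hmeas 0).abs hα0 hα.nonneg hcond
  filter_upwards [
    ae_tendsto_average_comp hmeas hident hint hα hsum (measurable_id.max measurable_const)
      (fun x => le_max_right x 0) fun x => max_le (le_abs_self x) (abs_nonneg x),
    ae_tendsto_average_comp hmeas hident hint hα hsum (measurable_neg.max measurable_const)
      (fun x => le_max_right (-x) 0) fun x => max_le (neg_le_abs x) (abs_nonneg x)]
    with ω pos_lim neg_lim
  have h := (pos_lim.sub neg_lim).sub_const (∫ ω, ξ 0 ω ∂P)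
  simp only [id_eq] at h
  rw [← integral_sub hint.pos_part hint.neg_part] at h
  simp only [← sub_div, ← Finset.sum_sub_distrib, max_zero_sub_max_neg_zero_eq_self,
    sub_self] at h
  refine h.congr' ?_
  filter_upwards [eventually_gt_atTop 0] with n hn
  simp only [fun i => (hident i).integral_eq, Finset.sum_sub_distrib, Finset.sum_const,
    Finset.card_range, nsmul_eq_mul]
  field_simp

end StrongLaw

/-- **Rio's strong law of large numbers for α-mixing sequences** (Theorem 6 of the paper):
if `(ξ i)` is identically distributed, integrable and α-mixing with
`∫_0^1 log(1 + α^→(y/2)) Ḡ^→(y) dy < ∞`, where `G` is the df of `|ξ 1|`, then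
`(1/n) ∑_{i=1}^n (ξ_i - E[ξ_i]) → 0` almost surely. -/
theorem rio_slln_alpha_mixing
    {Ω : Type*} [MeasurableSpace Ω] (P : Measure Ω) [IsProbabilityMeasure P]
    (ξ : ℕ → Ω → ℝ) (hmeas : ∀ i, Measurable (ξ i))
    (hident : ∀ i, Measure.map (ξ i) P = Measure.map (ξ 0) P)
    (hint : Integrable (ξ 0) P)
    (hmix : Tendsto (alphaCoef P ξ) atTop (nhds 0))
    (hcond : IntegrableOn
      (fun y => Real.log (1 + rcInv (alphaExt (alphaCoef P ξ)) (y / 2)) *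
        rcInv (fun x => 1 - distFun P (fun ω => |ξ 0 ω|) x) y)
      (Set.Ioo (0 : ℝ) 1)) :
    ∀ᵐ ω ∂P, Tendsto
      (fun n : ℕ => (1 / (n : ℝ)) * ∑ i ∈ Finset.range n, (ξ i ω - ∫ ω', ξ i ω' ∂P))
      atTop (nhds 0) := by
  exact rio_slln_alpha_mixing_general hmeas
    (fun i => ⟨(hmeas i).aemeasurable, (hmeas 0).aemeasurable, hident i⟩) hint
    (alphaMixingBound_alphaCoef ξ) hmix hcond
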